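/- arXiv:1409.4748 — 5 statements merged into one kernel-verified Lean document; each statement's English description precedes it below -/
import Mathlib

section
/- Assume θ^{*,n} → θ* as n → ∞ and that [H-1] holds. Then n^α (θ^{*,n} − θ*) → Dh(θ*)^{-1} Λ^0_1(θ*) as n → ∞; in particular θ^{*,n} − θ* = C_1 n^{−α} + o(n^{−α}) with C_1 = Dh(θ*)^{-1} Λ^0_1(θ*). -/
open Filter Topology

/-!
Put `A = Dh(θ*)`. Near `θ*` and for large `n`, the map `hⁿ - A` has small derivative, so by the mean
value inequality it is Lipschitz with small constant there; as `hⁿ(θ^{*,n}) = 0 = h(θ*)`, this reads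
`h(θ*) - hⁿ(θ*) = A (θ^{*,n} - θ*) + o(θ^{*,n} - θ*)`. Applying `A⁻¹` absorbs the error into an
equivalence `A⁻¹ (h(θ*) - hⁿ(θ*)) ~ θ^{*,n} - θ*`, without any a priori rate for `θ^{*,n} - θ*`.
-/

section

open Asymptotics

variable {ι 𝕜 E F : Type*} {l : Filter ι}

theorem tendsto_prod_nhds_of_tendstoUniformlyOnFilter {X Y : Type*} [TopologicalSpace X]
    [UniformSpace Y] {f : ι → X → Y} {g : X → Y} {a : X}
    (hf : TendstoUniformlyOnFilter f g l (𝓝 a)) (hg : ContinuousAt g a) :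
    Tendsto (fun p : ι × X => f p.1 p.2) (l ×ˢ 𝓝 a) (𝓝 (g a)) :=
  (hg.tendsto.comp tendsto_snd).congr_uniformity (tendstoUniformlyOnFilter_iff_tendsto.1 hf)

variable [NormedAddCommGroup E] [NormedAddCommGroup F]

theorem isEquivalent_apply_of_leftInverse [NontriviallyNormedField 𝕜] [NormedSpace 𝕜 E]
    [NormedSpace 𝕜 F] {A : E →L[𝕜] F} {B : F →L[𝕜] E} (hBA : B ∘L A = .id 𝕜 E)
    {u : ι → F} {v : ι → E} (huv : (fun i => u i - A (v i)) =o[l] v) :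
    IsEquivalent l (fun i => B (u i)) v := by
  have hBAv (i : ι) : B (A (v i)) = v i := DFunLike.congr_fun hBA (v i)
  have hB : (fun i => B (u i - A (v i))) =o[l] v := (B.isBigO_comp _ l).trans_isLittleO huv
  exact hB.congr_left fun i => by rw [map_sub, hBAv, Pi.sub_apply]

variable [RCLike 𝕜] [NormedSpace 𝕜 E] [NormedSpace 𝕜 F]

theorem isLittleO_image_sub_sub_of_tendsto_hasFDerivAt {f : ι → E → F} {f' : ι → E → E →L[𝕜] F}
    {A : E →L[𝕜] F} {a : E}
    (hf : ∀ᶠ p : ι × E in l ×ˢ 𝓝 a, HasFDerivAt (f p.1) (f' p.1 p.2) p.2)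
    (hf' : Tendsto (fun p : ι × E => f' p.1 p.2) (l ×ˢ 𝓝 a) (𝓝 A))
    {x y : ι → E} (hx : Tendsto x l (𝓝 a)) (hy : Tendsto y l (𝓝 a)) :
    (fun i => f i (x i) - f i (y i) - A (x i - y i)) =o[l] fun i => x i - y i := by
  refine isLittleO_iff.2 fun ε hε => ?_
  have hclose : ∀ᶠ p : ι × E in l ×ˢ 𝓝 a, ‖f' p.1 p.2 - A‖ ≤ ε := by
    filter_upwards [hf' (Metric.closedBall_mem_nhds A hε)] with p hp
    exact mem_closedBall_iff_norm.1 hp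
  obtain ⟨s, hs, t, ht, hst⟩ := eventually_prod_iff.1 (hf.and hclose)
  obtain ⟨r, hr, hball⟩ := Metric.eventually_nhds_iff_ball.1 ht
  filter_upwards [hs, hx (Metric.ball_mem_nhds a hr), hy (Metric.ball_mem_nhds a hr)]
    with i hi hxi hyi
  let : NormedSpace ℝ E := .restrictScalars ℝ 𝕜 E
  exact (convex_ball a r).norm_image_sub_le_of_norm_hasFDerivWithin_le'
    (fun z hz => (hst hi (hball z hz)).1.hasFDerivWithinAt)
    (fun z hz => (hst hi (hball z hz)).2) hyi hxi

theorem implicit_error_first_order_expansion_general {h : E → F} {hn : ι → E → F} {θs : E}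
    {θn : ι → E} (hsmooth : ContDiffAt 𝕜 1 h θs)
    (hnsmooth : ∀ᶠ p : ι × E in l ×ˢ 𝓝 θs, DifferentiableAt 𝕜 (hn p.1) p.2)
    (hzero : h θs = 0) (hnzero : ∀ i, hn i (θn i) = 0)
    {c : ι → 𝕜} {v : F} (hexp : Tendsto (fun i => c i • (h θs - hn i θs)) l (𝓝 v))
    (hDconv : TendstoUniformlyOnFilter (fun i => fderiv 𝕜 (hn i)) (fderiv 𝕜 h) l (𝓝 θs))
    {B : F →L[𝕜] E} (hB : B ∘L fderiv 𝕜 h θs = .id 𝕜 E) (hθconv : Tendsto θn l (𝓝 θs)) :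
    Tendsto (fun i => c i • (θn i - θs)) l (𝓝 (B v)) := by
  have hderiv : Tendsto (fun p : ι × E => fderiv 𝕜 (hn p.1) p.2) (l ×ˢ 𝓝 θs)
      (𝓝 (fderiv 𝕜 h θs)) :=
    tendsto_prod_nhds_of_tendstoUniformlyOnFilter hDconv
      (hsmooth.continuousAt_fderiv one_ne_zero)
  have hlin : (fun i => h θs - hn i θs - fderiv 𝕜 h θs (θn i - θs)) =o[l] fun i => θn i - θs := by
    simpa only [hzero, hnzero] using
      isLittleO_image_sub_sub_of_tendsto_hasFDerivAt (f' := fun i => fderiv 𝕜 (hn i))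
        (hnsmooth.mono fun _ hp => hp.hasFDerivAt) hderiv hθconv tendsto_const_nhds
  have hequiv : IsEquivalent l (fun i => c i • B (h θs - hn i θs)) fun i => c i • (θn i - θs) :=
    IsEquivalent.refl.smul (isEquivalent_apply_of_leftInverse hB hlin)
  refine hequiv.tendsto_nhds ?_
  simpa only [Function.comp_def, map_smul] using (B.continuous.tendsto v).comp hexp

end

/-- First-order expansion of the implicit discretization error: under [H-1]
(first-order expansion `h − h^n = Λ⁰₁ n^{−α} + o(n^{−α})`, local uniform convergence
of `Dh^n` to `Dh`, and invertibility of `Dh(θ*)`), if `θ^{*,n} → θ*` then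
`n^α (θ^{*,n} − θ*) → Dh(θ*)⁻¹ Λ⁰₁(θ*)`, i.e.
`θ^{*,n} − θ* = C₁ n^{−α} + o(n^{−α})` with `C₁ = Dh(θ*)⁻¹ Λ⁰₁(θ*)`. -/
theorem implicit_error_first_order_expansion {d : ℕ} (α : ℝ) (hα : 0 < α)
    (h : EuclideanSpace ℝ (Fin d) → EuclideanSpace ℝ (Fin d))
    (hn : ℕ → EuclideanSpace ℝ (Fin d) → EuclideanSpace ℝ (Fin d))
    (θs : EuclideanSpace ℝ (Fin d)) (θn : ℕ → EuclideanSpace ℝ (Fin d))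
    (hsmooth : ContDiff ℝ 1 h) (hnsmooth : ∀ n, ContDiff ℝ 1 (hn n))
    (hzero : h θs = 0) (hnzero : ∀ n, hn n (θn n) = 0)
    (Λ : EuclideanSpace ℝ (Fin d) → EuclideanSpace ℝ (Fin d))
    -- [H-1] (i): h(θ) − hⁿ(θ) = Λ(θ) n^{−α} + o(n^{−α})
    (hexp : ∀ θ, Tendsto (fun n : ℕ => ((n : ℝ) ^ α) • (h θ - hn n θ)) atTop (𝓝 (Λ θ)))
    -- [H-1] (ii): Dhⁿ → Dh locally uniformly
    (hDconv : TendstoLocallyUniformly (fun n => fderiv ℝ (hn n)) (fderiv ℝ h) atTop)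
    -- [H-1] (iii): Dh(θ*) is invertible, with (two-sided) inverse B
    (B : EuclideanSpace ℝ (Fin d) →L[ℝ] EuclideanSpace ℝ (Fin d))
    (hB1 : (fderiv ℝ h θs).comp B = ContinuousLinearMap.id ℝ _)
    (hB2 : B.comp (fderiv ℝ h θs) = ContinuousLinearMap.id ℝ _)
    (hθconv : Tendsto θn atTop (𝓝 θs)) :
    Tendsto (fun n : ℕ => ((n : ℝ) ^ α) • (θn n - θs)) atTop (𝓝 (B (Λ θs))) :=
  implicit_error_first_order_expansion_general hsmooth.contDiffAt
    (.of_forall fun p => (hnsmooth p.1).differentiable one_ne_zero p.2) hzero hnzero (hexp θs)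
    (tendstoLocallyUniformly_iff_filter.1 hDconv θs) hB2 hθconv
end

section
/- Let Cost(n, M) = K M n R(R+1)/2. Then, as ε → 0, inf { Cost(n, M) : (n, M) ∈ (ℕ*)², μ_R n^{−αR}(1 + |ε_{R+1}(n)|) + ν_R γ(M)^{1/2}(1 + φ_1(n) + φ_2(M)) ≤ ε } is asymptotically equivalent to K · (R(R+1)/2) · γ_0^{1/β} ν_R^{2/β} μ_R^{1/(αR)} · ε^{−(2/β + 1/(αR))} · (1 + 2αR/β)^{1/(αR)} · (1 + β/(2αR))^{2/β}. Moreover this asymptotic bound may be achieved with parameters n(ε) ∼ (2αR/β + 1)^{1/(αR)} μ_R^{1/(αR)} ε^{−1/(αR)} and M(ε) ∼ γ_0^{1/β} ν_R^{2/β} (1 + β/(2αR))^{2/β} ε^{−2/β}. -/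
open Filter Topology Real

/-! Put `a = αR`, `b = β/2` and `ν = ν_R √γ₀`. To leading order the constraint reads
`μ n^{-a} + ν M^{-b} ≤ ε`. Over real `n, M > 0` the product `n M` is minimal when the two terms take
the shares `b/(a+b)` and `a/(a+b)` of `ε`; optimality of the resulting sizes is the weighted AM-GM
inequality with these shares as weights. The true error dominates the leading one, so the lower
bound on the cost survives. To attain it, take the optimal sizes for a slightly smaller tolerance
`τ(ε) ∼ ε` that absorbs the relative corrections, and round them up, which only lowers the leading
error.
-/

open Asymptotics

section IsEquivalent

variable {ι : Type*} {l : Filter ι}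

lemma tendsto_div_nhds_one_of_isEquivalent {u v w : ι → ℝ} (huv : u ~[l] v) (hvw : v =ᶠ[l] w)
    (hv : ∀ᶠ i in l, v i ≠ 0) : Tendsto (fun i ↦ u i / w i) l (𝓝 1) :=
  (isEquivalent_iff_tendsto_one (hv.congr (hvw.mono fun _ h ↦ by rw [h]))).mp
    (huv.congr_right hvw)

lemma isEquivalent_rpow_of_eventually_nonneg {u v : ι → ℝ} (huv : u ~[l] v)
    (hv : ∀ᶠ i in l, 0 ≤ v i) (p : ℝ) : (fun i ↦ u i ^ p) ~[l] fun i ↦ v i ^ p := by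
  have habs : v =ᶠ[l] fun i ↦ |v i| := hv.mono fun i hi ↦ (abs_of_nonneg hi).symm
  have hpow := IsEquivalent.rpow (fun i ↦ abs_nonneg (v i)) (huv.congr_right habs) (r := p)
  exact hpow.congr_right (habs.symm.fun_comp (· ^ p))

lemma isEquivalent_sInf {S : ι → Set ℝ} {u v : ι → ℝ} (huv : u ~[l] v)
    (hu : ∀ᶠ i in l, u i ∈ S i) (hv : ∀ᶠ i in l, v i ∈ lowerBounds (S i)) :
    (fun i ↦ sInf (S i)) ~[l] v := by
  refine IsBigO.trans_isLittleO (.of_bound' ?_) huv.isLittleO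
  filter_upwards [hu, hv] with i hui hvi
  have hge : v i ≤ sInf (S i) := le_csInf ⟨_, hui⟩ hvi
  have hle : sInf (S i) ≤ u i := csInf_le ⟨_, hvi⟩ hui
  simp only [Pi.sub_apply, norm_eq_abs]
  rw [abs_of_nonneg (sub_nonneg.mpr hge), abs_of_nonneg (sub_nonneg.mpr (hge.trans hle))]
  exact sub_le_sub_right hle _

lemma isEquivalent_mul_one_add {f u : ι → ℝ} (hf : Tendsto f l (𝓝 0)) :
    (fun i ↦ u i * (1 + f i)) ~[l] u := by
  have hone : (fun i ↦ 1 + f i) ~[l] Function.const ι 1 :=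
    (isEquivalent_const_iff_tendsto one_ne_zero).mpr (by simpa using hf.const_add 1)
  simpa [Function.const_def, Pi.mul_def] using (IsEquivalent.refl (u := u)).mul hone

end IsEquivalent

section Majorant

variable {X : Type*} [LinearOrder X] [TopologicalSpace X] [OrderTopology X] [DenselyOrdered X]
  [NoMaxOrder X] {c : X}

lemma eventually_forall_mem_Ioc {p : X → Prop} (hp : ∀ᶠ t in 𝓝[>] c, p t) :
    ∀ᶠ x in 𝓝[>] c, ∀ t ∈ Set.Ioc c x, p t := by
  obtain ⟨d, hcd, hd⟩ := mem_nhdsGT_iff_exists_Ioc_subset.mp hp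
  filter_upwards [Ioc_mem_nhdsGT hcd] with x hx t ht
  exact hd ⟨ht.1, ht.2.trans hx.2⟩

lemma exists_tendsto_zero_forall_mem_Ioc_le {f : X → ℝ} (hf : Tendsto f (𝓝[>] c) (𝓝 0)) :
    ∃ δ : X → ℝ, (∀ x, 0 ≤ δ x) ∧ Tendsto δ (𝓝[>] c) (𝓝 0) ∧
      ∀ᶠ x in 𝓝[>] c, ∀ t ∈ Set.Ioc c x, f t ≤ δ x := by
  have hbound (η : ℝ) (hη : 0 < η) : ∀ᶠ x in 𝓝[>] c, ∀ t : Set.Ioc c x, |f t| ≤ η := by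
    have hsmall : ∀ᶠ t in 𝓝[>] c, |f t| ≤ η := by simpa using hf.abs.eventually_le_const (by simpa)
    exact (eventually_forall_mem_Ioc hsmall).mono fun x hx t ↦ hx t t.2
  have hnonneg (x : X) : 0 ≤ ⨆ t : Set.Ioc c x, |f t| := Real.iSup_nonneg fun _ ↦ abs_nonneg _
  refine ⟨fun x ↦ ⨆ t : Set.Ioc c x, |f t|, hnonneg, ?_, ?_⟩
  · refine Metric.tendsto_nhds.mpr fun η hη ↦ ?_
    filter_upwards [hbound (η / 2) (half_pos hη)] with x hx
    rw [dist_zero_right, norm_of_nonneg (hnonneg x)]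
    exact (Real.iSup_le hx (half_pos hη).le).trans_lt (half_lt_self hη)
  · filter_upwards [hbound 1 one_pos] with x hx t ht
    have hbdd : BddAbove (Set.range fun t : Set.Ioc c x ↦ |f t|) :=
      ⟨1, Set.forall_mem_range.mpr hx⟩
    exact (le_abs_self _).trans (le_ciSup hbdd ⟨t, ht⟩)

end Majorant

lemma exists_isEquivalent_id_mul_le {r : ℝ → ℝ} (hr : Tendsto r (𝓝[>] 0) (𝓝 1)) :
    ∃ τ : ℝ → ℝ, τ ~[𝓝[>] 0] id ∧ Tendsto τ (𝓝[>] 0) (𝓝[>] 0) ∧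
      ∀ᶠ ε in 𝓝[>] 0, τ ε * r (τ ε) ≤ ε := by
  obtain ⟨δ, hδ₀, hδ, hrδ⟩ := exists_tendsto_zero_forall_mem_Ioc_le
    (by simpa using hr.sub_const 1 : Tendsto (fun t ↦ r t - 1) (𝓝[>] 0) (𝓝 0))
  have hpos (ε : ℝ) : 0 < 1 + δ ε := by linarith [hδ₀ ε]
  have hτ : (fun ε ↦ ε / (1 + δ ε)) ~[𝓝[>] 0] id := by
    have hmul := (isEquivalent_mul_one_add (u := fun ε ↦ ε / (1 + δ ε)) hδ).symm
    exact hmul.congr_right (.of_forall fun ε ↦ div_mul_cancel₀ _ (hpos ε).ne')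
  refine ⟨_, hτ, tendsto_nhdsWithin_iff.mpr ⟨hτ.symm.tendsto_nhds ?_, ?_⟩, ?_⟩
  · exact tendsto_nhdsWithin_of_tendsto_nhds tendsto_id
  · filter_upwards [self_mem_nhdsWithin] with ε (hε : 0 < ε) using div_pos hε (hpos ε)
  · filter_upwards [hrδ, self_mem_nhdsWithin] with ε hrε (hε : 0 < ε)
    have hle : r (ε / (1 + δ ε)) - 1 ≤ δ ε :=
      hrε _ ⟨div_pos hε (hpos ε), div_le_self hε.le (by linarith [hδ₀ ε])⟩
    rw [div_mul_eq_mul_div, div_le_iff₀ (hpos ε)]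
    gcongr
    linarith

/-- The leading part of the error with `n` and `M` replaced by reals `x` and `y`: a bias `μ x^{-a}`
plus a statistical error `ν y^{-b}`. -/
noncomputable def leadingError (a b μ ν x y : ℝ) : ℝ := μ * x ^ (-a) + ν * y ^ (-b)

/-- The size at which the bias `μ x^{-a}` equals its optimal share `b / (a + b)` of the tolerance
`ε`, when it competes with an error of rate `b`. The optimal size for that other error `ν y^{-b}`
is `optimalSize b a ν ε`. -/
noncomputable def optimalSize (a b μ ε : ℝ) : ℝ := ((1 + a / b) * μ / ε) ^ a⁻¹

section OptimalSize

variable {a b μ ν ε x y : ℝ}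

lemma optimalSize_pos (ha : 0 < a) (hb : 0 < b) (hμ : 0 < μ) (hε : 0 < ε) :
    0 < optimalSize a b μ ε := by
  unfold optimalSize; positivity

lemma optimalSize_eq_mul (ha : 0 < a) (hb : 0 < b) (hμ : 0 < μ) (hε : 0 < ε) :
    optimalSize a b μ ε = (1 + a / b) ^ a⁻¹ * μ ^ a⁻¹ * ε ^ (-a⁻¹) := by
  rw [optimalSize, div_rpow (by positivity) hε.le, mul_rpow (by positivity) hμ.le,
    rpow_neg hε.le, div_eq_mul_inv]

lemma mul_rpow_neg_eq_share_mul (ha : 0 < a) (hb : 0 < b) (hμ : 0 < μ) (hε : 0 < ε) (hx : 0 < x) :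
    μ * x ^ (-a) = b / (a + b) * ε * (optimalSize a b μ ε / x) ^ a := by
  rw [div_rpow (optimalSize_pos ha hb hμ hε).le hx.le, optimalSize,
    rpow_inv_rpow (by positivity) ha.ne', rpow_neg hx.le]
  field_simp
  ring

lemma leadingError_le_of_optimalSize_le (ha : 0 < a) (hb : 0 < b) (hμ : 0 < μ) (hν : 0 < ν)
    (hε : 0 < ε) (hx : optimalSize a b μ ε ≤ x) (hy : optimalSize b a ν ε ≤ y) :
    leadingError a b μ ν x y ≤ ε := by
  have hx₀ := optimalSize_pos ha hb hμ hε
  have hy₀ := optimalSize_pos hb ha hν hε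
  calc leadingError a b μ ν x y
      = b / (a + b) * ε * (optimalSize a b μ ε / x) ^ a +
          a / (b + a) * ε * (optimalSize b a ν ε / y) ^ b := by
        rw [leadingError, mul_rpow_neg_eq_share_mul ha hb hμ hε (hx₀.trans_le hx),
          mul_rpow_neg_eq_share_mul hb ha hν hε (hy₀.trans_le hy)]
    _ ≤ b / (a + b) * ε * 1 + a / (b + a) * ε * 1 := by
        gcongr
        · exact rpow_le_one (div_nonneg hx₀.le (hx₀.le.trans hx))
            (div_le_one_of_le₀ hx (hx₀.le.trans hx)) ha.le
        · exact rpow_le_one (div_nonneg hy₀.le (hy₀.le.trans hy))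
            (div_le_one_of_le₀ hy (hy₀.le.trans hy)) hb.le
    _ = ε := by field_simp; ring

lemma optimalSize_mul_optimalSize_le (ha : 0 < a) (hb : 0 < b) (hμ : 0 < μ) (hν : 0 < ν)
    (hε : 0 < ε) (hx : 0 < x) (hy : 0 < y) (h : leadingError a b μ ν x y ≤ ε) :
    optimalSize a b μ ε * optimalSize b a ν ε ≤ x * y := by
  set u := optimalSize a b μ ε / x with hu
  set v := optimalSize b a ν ε / y with hv
  have hu₀ : 0 < u := div_pos (optimalSize_pos ha hb hμ hε) hx
  have hv₀ : 0 < v := div_pos (optimalSize_pos hb ha hν hε) hy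
  have hmean : b / (a + b) * u ^ a + a / (a + b) * v ^ b ≤ 1 := by
    rw [leadingError, mul_rpow_neg_eq_share_mul ha hb hμ hε hx,
      mul_rpow_neg_eq_share_mul hb ha hν hε hy, add_comm b a] at h
    refine le_of_mul_le_mul_left ?_ hε
    linarith
  have hgeom : (u * v) ^ (a * b / (a + b)) ≤ 1 := by
    calc (u * v) ^ (a * b / (a + b))
        = (u ^ a) ^ (b / (a + b)) * (v ^ b) ^ (a / (a + b)) := by
          rw [mul_rpow hu₀.le hv₀.le, ← rpow_mul hu₀.le, ← rpow_mul hv₀.le,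
            mul_div_assoc', mul_div_assoc', mul_comm b a]
      _ ≤ b / (a + b) * u ^ a + a / (a + b) * v ^ b :=
          geom_mean_le_arith_mean2_weighted (by positivity) (by positivity) (by positivity)
            (by positivity) (by field_simp; ring)
      _ ≤ 1 := hmean
  have huv : u * v ≤ 1 := by
    by_contra! hlt
    exact hgeom.not_gt (one_lt_rpow hlt (by positivity))
  rwa [hu, hv, div_mul_div_comm, div_le_one (by positivity)] at huv

lemma tendsto_optimalSize_atTop (ha : 0 < a) (hb : 0 < b) (hμ : 0 < μ) :
    Tendsto (optimalSize a b μ) (𝓝[>] 0) atTop :=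
  (tendsto_rpow_atTop (inv_pos.mpr ha)).comp
    (tendsto_inv_nhdsGT_zero.const_mul_atTop (by positivity : 0 < (1 + a / b) * μ))

lemma isEquivalent_natCeil_optimalSize_comp (ha : 0 < a) (hb : 0 < b) (hμ : 0 < μ) {τ : ℝ → ℝ}
    (hτ : τ ~[𝓝[>] 0] id) (hτ₀ : Tendsto τ (𝓝[>] 0) (𝓝[>] 0)) :
    (fun ε ↦ (⌈optimalSize a b μ (τ ε)⌉₊ : ℝ)) ~[𝓝[>] 0] optimalSize a b μ := by
  have hceil := isEquivalent_nat_ceil.comp_tendsto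
    ((tendsto_optimalSize_atTop ha hb hμ).comp hτ₀)
  have hbase : (fun ε ↦ (1 + a / b) * μ / τ ε) ~[𝓝[>] 0] fun ε ↦ (1 + a / b) * μ / ε :=
    IsEquivalent.refl.div hτ
  refine hceil.trans (isEquivalent_rpow_of_eventually_nonneg hbase ?_ a⁻¹)
  filter_upwards [self_mem_nhdsWithin] with ε (hε : 0 < ε)
  positivity

lemma isEquivalent_leadingError {ι : Type*} {l : Filter ι} {u v f g : ι → ℝ} (hμ : 0 ≤ μ)
    (hν : 0 ≤ ν) (hu : 0 ≤ u) (hv : 0 ≤ v) (hf : Tendsto f l (𝓝 0)) (hg : Tendsto g l (𝓝 0)) :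
    (fun i ↦ μ * u i ^ (-a) * (1 + f i) + ν * v i ^ (-b) * (1 + g i)) ~[l]
      fun i ↦ leadingError a b μ ν (u i) (v i) :=
  IsEquivalent.add_add_of_nonneg (fun i ↦ mul_nonneg hμ (rpow_nonneg (hu i) _))
    (fun i ↦ mul_nonneg hν (rpow_nonneg (hv i) _))
    (isEquivalent_mul_one_add hf) (isEquivalent_mul_one_add hg)

lemma leadingError_le_mul_one_add (hμ : 0 ≤ μ) (hν : 0 ≤ ν) (hx : 0 ≤ x) (hy : 0 ≤ y) {s t : ℝ}
    (hs : 0 ≤ s) (ht : 0 ≤ t) :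
    leadingError a b μ ν x y ≤ μ * x ^ (-a) * (1 + s) + ν * y ^ (-b) * (1 + t) :=
  add_le_add (le_mul_of_one_le_right (by positivity) (by linarith))
    (le_mul_of_one_le_right (by positivity) (by linarith))

end OptimalSize

section Attainment

variable {a b μ ν : ℝ} {F : ℕ → ℕ → ℝ}

theorem exists_isEquivalent_optimalSize (ha : 0 < a) (hb : 0 < b) (hμ : 0 < μ) (hν : 0 < ν)
    (hF : (fun p : ℕ × ℕ ↦ F p.1 p.2) ~[atTop ×ˢ atTop] fun p ↦ leadingError a b μ ν p.1 p.2) :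
    ∃ n M : ℝ → ℕ, (∀ᶠ ε in 𝓝[>] 0, F (n ε) (M ε) ≤ ε) ∧
      (fun ε ↦ (n ε : ℝ)) ~[𝓝[>] 0] optimalSize a b μ ∧
      (fun ε ↦ (M ε : ℝ)) ~[𝓝[>] 0] optimalSize b a ν := by
  have hsizes : Tendsto (fun t ↦ (⌈optimalSize a b μ t⌉₊, ⌈optimalSize b a ν t⌉₊)) (𝓝[>] 0)
      (atTop ×ˢ atTop) :=
    (tendsto_nat_ceil_atTop.comp (tendsto_optimalSize_atTop ha hb hμ)).prodMk
      (tendsto_nat_ceil_atTop.comp (tendsto_optimalSize_atTop hb ha hν))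
  obtain ⟨r, hr, hFr⟩ := (hF.comp_tendsto hsizes).exists_eq_mul
  obtain ⟨τ, hτ, hτ₀, hτr⟩ := exists_isEquivalent_id_mul_le hr
  refine ⟨fun ε ↦ ⌈optimalSize a b μ (τ ε)⌉₊, fun ε ↦ ⌈optimalSize b a ν (τ ε)⌉₊, ?_,
    isEquivalent_natCeil_optimalSize_comp ha hb hμ hτ hτ₀,
    isEquivalent_natCeil_optimalSize_comp hb ha hν hτ hτ₀⟩
  have hr₀ : ∀ᶠ t in 𝓝[>] 0, 0 ≤ r t := hr.eventually_const_le one_pos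
  filter_upwards [hτ₀.eventually hFr, hτ₀.eventually hr₀, hτ₀.eventually self_mem_nhdsWithin, hτr]
    with ε hFε hrε (hτε : 0 < τ ε) hle
  calc F ⌈optimalSize a b μ (τ ε)⌉₊ ⌈optimalSize b a ν (τ ε)⌉₊
      = r (τ ε) * leadingError a b μ ν ⌈optimalSize a b μ (τ ε)⌉₊ ⌈optimalSize b a ν (τ ε)⌉₊ := hFε
    _ ≤ r (τ ε) * τ ε := by
        gcongr
        exact leadingError_le_of_optimalSize_le ha hb hμ hν hτε (Nat.le_ceil _) (Nat.le_ceil _)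
    _ ≤ ε := by rwa [mul_comm]

theorem isEquivalent_sInf_cost (ha : 0 < a) (hb : 0 < b) (hμ : 0 < μ) (hν : 0 < ν)
    (hF : (fun p : ℕ × ℕ ↦ F p.1 p.2) ~[atTop ×ˢ atTop] fun p ↦ leadingError a b μ ν p.1 p.2)
    (hle : ∀ n M : ℕ, 1 ≤ n → 1 ≤ M → leadingError a b μ ν n M ≤ F n M) {Q : ℝ} (hQ : 0 ≤ Q) :
    (fun ε ↦ sInf {c : ℝ | ∃ n M : ℕ, 1 ≤ n ∧ 1 ≤ M ∧ F n M ≤ ε ∧ c = Q * (n * M)}) ~[𝓝[>] 0]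
      fun ε ↦ Q * (optimalSize a b μ ε * optimalSize b a ν ε) := by
  obtain ⟨n, M, hfeas, hn, hM⟩ := exists_isEquivalent_optimalSize ha hb hμ hν hF
  refine isEquivalent_sInf (u := fun ε ↦ Q * (n ε * M ε)) (IsEquivalent.refl.mul (hn.mul hM)) ?_ ?_
  · filter_upwards [hfeas,
      (hn.tendsto_atTop_iff.mpr (tendsto_optimalSize_atTop ha hb hμ)).eventually_ge_atTop 1,
      (hM.tendsto_atTop_iff.mpr (tendsto_optimalSize_atTop hb ha hν)).eventually_ge_atTop 1]
      with ε hε hnε hMε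
    exact ⟨n ε, M ε, mod_cast hnε, mod_cast hMε, hε, rfl⟩
  · filter_upwards [self_mem_nhdsWithin] with ε (hε : 0 < ε)
    rintro _ ⟨n, M, hn, hM, hnM, rfl⟩
    exact mul_le_mul_of_nonneg_left (optimalSize_mul_optimalSize_le ha hb hμ hν hε
      (mod_cast hn) (mod_cast hM) ((hle n M hn hM).trans hnM)) hQ

end Attainment

section RichardsonRomberg

variable {α β γ μ ν ε y R : ℝ}

lemma mul_sqrt_div_rpow_eq (hγ : 0 ≤ γ) (hy : 0 ≤ y) :
    ν * √(γ / y ^ β) = ν * √γ * y ^ (-(β / 2)) := by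
  rw [sqrt_div hγ, sqrt_eq_rpow (y ^ β), ← rpow_mul hy, rpow_neg hy, mul_one_div, mul_div_assoc',
    div_eq_mul_inv]

lemma optimalSize_bias_eq (hα : 0 < α) (hR : 0 < R) (hβ : 0 < β) (hμ : 0 < μ) (hε : 0 < ε) :
    optimalSize (α * R) (β / 2) μ ε =
      (2 * α * R / β + 1) ^ (1 / (α * R)) * μ ^ (1 / (α * R)) * ε ^ (-(1 / (α * R))) := by
  have hbase : 1 + α * R / (β / 2) = 2 * α * R / β + 1 := by field_simp; ring
  rw [optimalSize_eq_mul (by positivity) (by positivity) hμ hε, hbase, one_div]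

lemma optimalSize_statistical_eq (hα : 0 < α) (hR : 0 < R) (hβ : 0 < β) (hγ : 0 < γ) (hν : 0 < ν)
    (hε : 0 < ε) :
    optimalSize (β / 2) (α * R) (ν * √γ) ε =
      γ ^ (1 / β) * ν ^ (2 / β) * (1 + β / (2 * α * R)) ^ (2 / β) * ε ^ (-(2 / β)) := by
  have hbase : β / 2 / (α * R) = β / (2 * α * R) := by field_simp
  have hsqrt : (ν * √γ) ^ (2 / β) = ν ^ (2 / β) * γ ^ (1 / β) := by
    rw [mul_rpow hν.le (sqrt_nonneg γ), sqrt_eq_rpow, ← rpow_mul hγ.le]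
    congr 2
    field_simp
  rw [optimalSize_eq_mul (by positivity) (by positivity) (by positivity) hε, hbase, inv_div, hsqrt]
  ring

lemma mul_optimalSize_mul_optimalSize_eq (hα : 0 < α) (hR : 0 < R) (hβ : 0 < β) (hγ : 0 < γ)
    (hμ : 0 < μ) (hν : 0 < ν) (hε : 0 < ε) (Q : ℝ) :
    Q * (optimalSize (α * R) (β / 2) μ ε * optimalSize (β / 2) (α * R) (ν * √γ) ε) =
      Q * γ ^ (1 / β) * ν ^ (2 / β) * μ ^ (1 / (α * R)) * ε ^ (-(2 / β + 1 / (α * R))) *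
        (1 + 2 * α * R / β) ^ (1 / (α * R)) * (1 + β / (2 * α * R)) ^ (2 / β) := by
  rw [optimalSize_bias_eq hα hR hβ hμ hε, optimalSize_statistical_eq hα hR hβ hγ hν hε, neg_add,
    rpow_add hε, add_comm (2 * α * R / β)]
  ring

end RichardsonRomberg

theorem rr_cost_asymptotics_general (α : ℝ) (hα : 0 < α) (R : ℝ) (hR : 0 < R)
    (β γ0 K μR νR : ℝ) (hβ : 0 < β)
    (hγ0 : 0 < γ0) (hK : 0 < K) (hμ : 0 < μR) (hν : 0 < νR)
    (εR : ℕ → ℝ) (hεR : Tendsto εR atTop (𝓝 0))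
    (φ1 φ2 : ℕ → ℝ) (hφ1nn : ∀ n, 0 ≤ φ1 n) (hφ2nn : ∀ M, 0 ≤ φ2 M)
    (hφ1 : Tendsto φ1 atTop (𝓝 0)) (hφ2 : Tendsto φ2 atTop (𝓝 0))
    (constraint : ℕ → ℕ → ℝ → Prop)
    (hconstraint : ∀ n M ε, constraint n M ε ↔
      μR * (n : ℝ) ^ (-(α * R)) * (1 + |εR n|) +
          νR * Real.sqrt (γ0 / (M : ℝ) ^ β) * (1 + φ1 n + φ2 M) ≤ ε)
    (cost : ℕ → ℕ → ℝ)
    (hcost : ∀ n M, cost n M = K * (M : ℝ) * (n : ℝ) * (R * (R + 1) / 2))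
    (V : ℝ → ℝ)
    (hV : ∀ ε, V ε = sInf {c : ℝ | ∃ n M : ℕ, 1 ≤ n ∧ 1 ≤ M ∧
      constraint n M ε ∧ c = cost n M})
    (asymp : ℝ → ℝ)
    (hasymp : ∀ ε, asymp ε =
      K * (R * (R + 1) / 2) * γ0 ^ (1 / β) * νR ^ (2 / β) *
        μR ^ (1 / (α * R)) * ε ^ (-(2 / β + 1 / (α * R))) *
        (1 + 2 * α * R / β) ^ (1 / (α * R)) *
        (1 + β / (2 * α * R)) ^ (2 / β)) :
    Tendsto (fun ε => V ε / asymp ε) (𝓝[>] (0 : ℝ)) (𝓝 1) ∧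
      ∃ nf Mf : ℝ → ℕ,
        (∀ᶠ ε in 𝓝[>] (0 : ℝ), constraint (nf ε) (Mf ε) ε) ∧
        Tendsto (fun ε => (nf ε : ℝ) /
            ((2 * α * R / β + 1) ^ (1 / (α * R)) *
              μR ^ (1 / (α * R)) * ε ^ (-(1 / (α * R)))))
          (𝓝[>] (0 : ℝ)) (𝓝 1) ∧
        Tendsto (fun ε => (Mf ε : ℝ) /
            (γ0 ^ (1 / β) * νR ^ (2 / β) *
              (1 + β / (2 * α * R)) ^ (2 / β) * ε ^ (-(2 / β))))
          (𝓝[>] (0 : ℝ)) (𝓝 1) ∧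
        Tendsto (fun ε => cost (nf ε) (Mf ε) / asymp ε) (𝓝[>] (0 : ℝ)) (𝓝 1) := by
  have ha : 0 < α * R := by positivity
  have hb : 0 < β / 2 := by positivity
  have hν' : 0 < νR * √γ0 := by positivity
  have hQ : 0 < K * (R * (R + 1) / 2) := by positivity
  let F (n M : ℕ) : ℝ := μR * (n : ℝ) ^ (-(α * R)) * (1 + |εR n|) +
    νR * √γ0 * (M : ℝ) ^ (-(β / 2)) * (1 + (φ1 n + φ2 M))
  have hconstraint' (n M ε) : constraint n M ε ↔ F n M ≤ ε := by
    rw [hconstraint, mul_sqrt_div_rpow_eq hγ0.le M.cast_nonneg, add_assoc 1]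
  have hcost' (n M) : cost n M = K * (R * (R + 1) / 2) * (n * M) := by rw [hcost]; ring
  have hF : (fun p : ℕ × ℕ ↦ F p.1 p.2) ~[atTop ×ˢ atTop]
      fun p ↦ leadingError (α * R) (β / 2) μR (νR * √γ0) p.1 p.2 :=
    isEquivalent_leadingError hμ.le hν'.le (fun p ↦ p.1.cast_nonneg) (fun p ↦ p.2.cast_nonneg)
      (abs_zero (α := ℝ) ▸ (hεR.comp tendsto_fst).abs)
      (add_zero (0 : ℝ) ▸ (hφ1.comp tendsto_fst).add (hφ2.comp tendsto_snd))
  have hV' := isEquivalent_sInf_cost ha hb hμ hν' hF (fun n M _ _ ↦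
    leadingError_le_mul_one_add hμ.le hν'.le n.cast_nonneg M.cast_nonneg (abs_nonneg _)
      (add_nonneg (hφ1nn n) (hφ2nn M))) hQ.le
  obtain ⟨n, M, hfeas, hn, hM⟩ := exists_isEquivalent_optimalSize ha hb hμ hν' hF
  have hpos : ∀ᶠ ε : ℝ in 𝓝[>] 0, 0 < ε := self_mem_nhdsWithin
  have hn₀ := hpos.mono fun ε hε ↦ (optimalSize_pos ha hb hμ hε).ne'
  have hM₀ := hpos.mono fun ε hε ↦ (optimalSize_pos hb ha hν' hε).ne'
  have hcost₀ := (hn₀.and hM₀).mono fun ε h ↦ mul_ne_zero hQ.ne' (mul_ne_zero h.1 h.2)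
  have hasymp' := hpos.mono fun ε hε ↦
    (mul_optimalSize_mul_optimalSize_eq hα hR hβ hγ0 hμ hν hε _).trans (hasymp ε).symm
  simp only [hV, hconstraint', hcost']
  exact ⟨tendsto_div_nhds_one_of_isEquivalent hV' hasymp' hcost₀, n, M, hfeas,
    tendsto_div_nhds_one_of_isEquivalent hn
      (hpos.mono fun ε hε ↦ optimalSize_bias_eq hα hR hβ hμ hε) hn₀,
    tendsto_div_nhds_one_of_isEquivalent hM
      (hpos.mono fun ε hε ↦ optimalSize_statistical_eq hα hR hβ hγ0 hν hε) hM₀,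
    tendsto_div_nhds_one_of_isEquivalent (IsEquivalent.refl.mul (hn.mul hM)) hasymp' hcost₀⟩

/-- Asymptotically optimal computational cost of the multi-step Richardson–Romberg
stochastic approximation estimator of order `R`: with `Cost(n,M) = K M n R(R+1)/2`
and step `γ(p) = γ₀/p^β`, the infimum of the cost over `(n,M) ∈ (ℕ*)²` subject to
`μ_R n^{−αR}(1+|ε_{R+1}(n)|) + ν_R γ(M)^{1/2}(1+φ₁(n)+φ₂(M)) ≤ ε` is equivalent, as
`ε → 0⁺`, to
`K (R(R+1)/2) γ₀^{1/β} ν_R^{2/β} μ_R^{1/(αR)} ε^{−(2/β+1/(αR))}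
  (1+2αR/β)^{1/(αR)} (1+β/(2αR))^{2/β}`,
and this bound is achieved with parameters
`n(ε) ∼ (2αR/β+1)^{1/(αR)} μ_R^{1/(αR)} ε^{−1/(αR)}` and
`M(ε) ∼ γ₀^{1/β} ν_R^{2/β} (1+β/(2αR))^{2/β} ε^{−2/β}`. -/
theorem rr_cost_asymptotics (α : ℝ) (hα : 0 < α) (R : ℕ) (hR : 1 ≤ R)
    (β γ0 K μR νR : ℝ) (hβ1 : 1 / 2 < β) (hβ2 : β ≤ 1)
    (hγ0 : 0 < γ0) (hK : 0 < K) (hμ : 0 < μR) (hν : 0 < νR)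
    (εR : ℕ → ℝ) (hεR : Tendsto εR atTop (𝓝 0))
    (φ1 φ2 : ℕ → ℝ) (hφ1nn : ∀ n, 0 ≤ φ1 n) (hφ2nn : ∀ M, 0 ≤ φ2 M)
    (hφ1 : Tendsto φ1 atTop (𝓝 0)) (hφ2 : Tendsto φ2 atTop (𝓝 0))
    (hφ2anti : Antitone φ2)
    (constraint : ℕ → ℕ → ℝ → Prop)
    (hconstraint : ∀ n M ε, constraint n M ε ↔
      μR * (n : ℝ) ^ (-(α * (R : ℝ))) * (1 + |εR n|) +
          νR * Real.sqrt (γ0 / (M : ℝ) ^ β) * (1 + φ1 n + φ2 M) ≤ ε)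
    (cost : ℕ → ℕ → ℝ)
    (hcost : ∀ n M, cost n M = K * (M : ℝ) * (n : ℝ) * ((R : ℝ) * ((R : ℝ) + 1) / 2))
    (V : ℝ → ℝ)
    (hV : ∀ ε, V ε = sInf {c : ℝ | ∃ n M : ℕ, 1 ≤ n ∧ 1 ≤ M ∧
      constraint n M ε ∧ c = cost n M})
    (asymp : ℝ → ℝ)
    (hasymp : ∀ ε, asymp ε =
      K * ((R : ℝ) * ((R : ℝ) + 1) / 2) * γ0 ^ (1 / β) * νR ^ (2 / β) *
        μR ^ (1 / (α * (R : ℝ))) * ε ^ (-(2 / β + 1 / (α * (R : ℝ)))) *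
        (1 + 2 * α * (R : ℝ) / β) ^ (1 / (α * (R : ℝ))) *
        (1 + β / (2 * α * (R : ℝ))) ^ (2 / β)) :
    Tendsto (fun ε => V ε / asymp ε) (𝓝[>] (0 : ℝ)) (𝓝 1) ∧
      ∃ nf Mf : ℝ → ℕ,
        (∀ᶠ ε in 𝓝[>] (0 : ℝ), constraint (nf ε) (Mf ε) ε) ∧
        Tendsto (fun ε => (nf ε : ℝ) /
            ((2 * α * (R : ℝ) / β + 1) ^ (1 / (α * (R : ℝ))) *
              μR ^ (1 / (α * (R : ℝ))) * ε ^ (-(1 / (α * (R : ℝ))))))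
          (𝓝[>] (0 : ℝ)) (𝓝 1) ∧
        Tendsto (fun ε => (Mf ε : ℝ) /
            (γ0 ^ (1 / β) * νR ^ (2 / β) *
              (1 + β / (2 * α * (R : ℝ))) ^ (2 / β) * ε ^ (-(2 / β))))
          (𝓝[>] (0 : ℝ)) (𝓝 1) ∧
        Tendsto (fun ε => cost (nf ε) (Mf ε) / asymp ε) (𝓝[>] (0 : ℝ)) (𝓝 1) := by
  exact rr_cost_asymptotics_general α hα R (Nat.cast_pos.mpr hR) β γ0 K μR νR (by linarith) hγ0 hK
    hμ hν εR hεR φ1 φ2 hφ1nn hφ2nn hφ1 hφ2 constraint hconstraint cost hcost V hV asymp hasymp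
end

section
/- For every ε > 0, the minimum of the function (n, M) ↦ K M n R(R+1)/2 over pairs of positive reals (n, M) subject to the constraint μ n^{−αR} + ν γ_0^{1/2} M^{−β/2} ≤ ε is attained at n(ε) = (2αR/β + 1)^{1/(αR)} μ^{1/(αR)} ε^{−1/(αR)} and M(ε) = γ_0^{1/β} ν^{2/β} (1 + β/(2αR))^{2/β} ε^{−2/β}, and the minimal value equals K · (R(R+1)/2) · γ_0^{1/β} ν^{2/β} μ^{1/(αR)} · ε^{−(2/β + 1/(αR))} · (1 + 2αR/β)^{1/(αR)} · (1 + β/(2αR))^{2/β}. -/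
open Filter Finset Real

/-!
Minimizing a product is insensitive to rescaling either factor, so measure each one in units of
the claimed optimum: `n = s * nε`, `M = t * Mε`. With `a = αR` and `b = β / 2`, the optimum splits
the budget `ε` between the two terms in the ratio `b : a`, and the constraint becomes
`b / (a + b) * s ^ (-a) + a / (a + b) * t ^ (-b) ≤ 1`. With exactly these weights the weighted
geometric mean of `s ^ (-a)` and `t ^ (-b)` is a negative power of `s * t`, so AM-GM yields
`1 ≤ s * t`.
-/

/-- The feasible set of the budget constraint `c x⁻ᵃ + d y⁻ᵇ ≤ ε` on pairs of positive reals, over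
which the product `x y` is to be minimized. -/
def feasibleSet (a b c d ε : ℝ) : Set (ℝ × ℝ) :=
  {q | 0 < q.1 ∧ 0 < q.2 ∧ c * q.1 ^ (-a) + d * q.2 ^ (-b) ≤ ε}

/-- The first coordinate of the minimizer of `x y` subject to `c x⁻ᵃ + d y⁻ᵇ ≤ ε`: the point at
which `c x⁻ᵃ` uses up the share `b / (a + b)` of the budget `ε`. It does not depend on `d`, and the
second coordinate is `optimalCoord b a d ε` because the problem is symmetric. -/
noncomputable def optimalCoord (a b c ε : ℝ) : ℝ :=
  ((1 + a / b) * c * ε⁻¹) ^ (1 / a)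

section PowerConstraint

variable {a b c d ε : ℝ}

theorem optimalCoord_pos (ha : 0 < a) (hb : 0 < b) (hc : 0 < c) (hε : 0 < ε) :
    0 < optimalCoord a b c ε := by
  unfold optimalCoord
  positivity

theorem optimalCoord_eq_mul_rpow (ha : 0 < a) (hb : 0 < b) (hc : 0 ≤ c) (hε : 0 ≤ ε) :
    optimalCoord a b c ε = (1 + a / b) ^ (1 / a) * c ^ (1 / a) * ε ^ (-(1 / a)) := by
  rw [optimalCoord, mul_rpow (by positivity) (by positivity),
    mul_rpow (by positivity) (by positivity), inv_rpow hε, rpow_neg hε]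

theorem mul_optimalCoord_rpow_neg (ha : 0 < a) (hb : 0 < b) (hc : 0 < c) (hε : 0 ≤ ε) :
    c * optimalCoord a b c ε ^ (-a) = ε * (b / (a + b)) := by
  have hexp : 1 / a * -a = -1 := by field_simp
  rw [optimalCoord, ← rpow_mul (by positivity), hexp, rpow_neg_one, mul_inv, mul_inv, inv_inv]
  field_simp
  ring

theorem mul_rpow_neg_eq_div_optimalCoord (ha : 0 < a) (hb : 0 < b) (hc : 0 < c) (hε : 0 < ε)
    {x : ℝ} (hx : 0 ≤ x) :
    c * x ^ (-a) = ε * (b / (a + b) * (x / optimalCoord a b c ε) ^ (-a)) := by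
  have hopt := optimalCoord_pos ha hb hc hε
  rw [← mul_assoc, ← mul_optimalCoord_rpow_neg ha hb hc hε.le, mul_assoc,
    ← mul_rpow hopt.le (by positivity), mul_div_cancel₀ x hopt.ne']

theorem optimalCoord_mem_feasibleSet (ha : 0 < a) (hb : 0 < b) (hc : 0 < c) (hd : 0 < d)
    (hε : 0 < ε) : (optimalCoord a b c ε, optimalCoord b a d ε) ∈ feasibleSet a b c d ε := by
  refine ⟨optimalCoord_pos ha hb hc hε, optimalCoord_pos hb ha hd hε, le_of_eq ?_⟩
  rw [mul_optimalCoord_rpow_neg ha hb hc hε.le, mul_optimalCoord_rpow_neg hb ha hd hε.le]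
  field_simp
  ring

theorem one_le_mul_of_weighted_rpow_neg_le_one (ha : 0 < a) (hb : 0 < b) {s t : ℝ} (hs : 0 < s)
    (ht : 0 < t) (h : b / (a + b) * s ^ (-a) + a / (a + b) * t ^ (-b) ≤ 1) : 1 ≤ s * t := by
  have hgeom : (s * t) ^ (-(a * b / (a + b))) ≤ 1 :=
    calc (s * t) ^ (-(a * b / (a + b)))
        = (s ^ (-a)) ^ (b / (a + b)) * (t ^ (-b)) ^ (a / (a + b)) := by
          rw [mul_rpow hs.le ht.le, ← rpow_mul hs.le, ← rpow_mul ht.le]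
          congr 2 <;> ring
      _ ≤ b / (a + b) * s ^ (-a) + a / (a + b) * t ^ (-b) :=
          geom_mean_le_arith_mean2_weighted (by positivity) (by positivity) (by positivity)
            (by positivity) (by field_simp; ring)
      _ ≤ 1 := h
  have hexp : -(a * b / (a + b)) < 0 := neg_neg_of_pos (by positivity)
  contrapose! hgeom
  exact one_lt_rpow_of_pos_of_lt_one_of_neg (mul_pos hs ht) hgeom hexp

theorem isMinOn_mul_feasibleSet (ha : 0 < a) (hb : 0 < b) (hc : 0 < c) (hd : 0 < d)
    (hε : 0 < ε) :
    IsMinOn (fun q : ℝ × ℝ ↦ q.1 * q.2) (feasibleSet a b c d ε)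
      (optimalCoord a b c ε, optimalCoord b a d ε) := by
  rintro ⟨x, y⟩ ⟨hx : 0 < x, hy : 0 < y, hxy : c * x ^ (-a) + d * y ^ (-b) ≤ ε⟩
  have hx₀ := optimalCoord_pos ha hb hc hε
  have hy₀ := optimalCoord_pos hb ha hd hε
  rw [mul_rpow_neg_eq_div_optimalCoord ha hb hc hε hx.le,
    mul_rpow_neg_eq_div_optimalCoord hb ha hd hε hy.le, ← mul_add, add_comm b a,
    mul_le_iff_le_one_right hε] at hxy
  have hratio :=
    one_le_mul_of_weighted_rpow_neg_le_one ha hb (div_pos hx hx₀) (div_pos hy hy₀) hxy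
  rwa [div_mul_div_comm, one_le_div (mul_pos hx₀ hy₀)] at hratio

end PowerConstraint

theorem cost_optimization_explicit_solution_general
    {α R β K μ ν γ0 ε : ℝ} (hα : 0 < α) (hR : 0 < R) (hβ : 0 < β) (hK : 0 ≤ K)
    (hμ : 0 < μ) (hν : 0 < ν) (hγ0 : 0 < γ0) (hε : 0 < ε)
    {cost : ℝ → ℝ → ℝ} (hcost : ∀ n M, cost n M = K * M * n * (R * (R + 1) / 2))
    {S : Set (ℝ × ℝ)}
    (hS : S = {q : ℝ × ℝ | 0 < q.1 ∧ 0 < q.2 ∧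
      μ * q.1 ^ (-(α * R)) + ν * γ0 ^ ((1 : ℝ) / 2) * q.2 ^ (-(β / 2)) ≤ ε})
    {nε Mε : ℝ}
    (hn : nε = (2 * α * R / β + 1) ^ (1 / (α * R)) * μ ^ (1 / (α * R)) * ε ^ (-(1 / (α * R))))
    (hM : Mε = γ0 ^ (1 / β) * ν ^ (2 / β) * (1 + β / (2 * α * R)) ^ (2 / β) * ε ^ (-(2 / β))) :
    (nε, Mε) ∈ S ∧ (∀ q ∈ S, cost nε Mε ≤ cost q.1 q.2) ∧
      cost nε Mε =
        K * (R * (R + 1) / 2) * γ0 ^ (1 / β) * ν ^ (2 / β) * μ ^ (1 / (α * R)) *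
          ε ^ (-(2 / β + 1 / (α * R))) * (1 + 2 * α * R / β) ^ (1 / (α * R)) *
          (1 + β / (2 * α * R)) ^ (2 / β) := by
  have ha : 0 < α * R := mul_pos hα hR
  have hb : 0 < β / 2 := half_pos hβ
  have hd : 0 < ν * γ0 ^ ((1 : ℝ) / 2) := by positivity
  have hn_opt : nε = optimalCoord (α * R) (β / 2) μ ε := by
    rw [hn, optimalCoord_eq_mul_rpow ha hb hμ.le hε.le, div_div_eq_mul_div, add_comm]
    ring_nf
  have hM_opt : Mε = optimalCoord (β / 2) (α * R) (ν * γ0 ^ ((1 : ℝ) / 2)) ε := by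
    rw [hM, optimalCoord_eq_mul_rpow hb ha hd.le hε.le, mul_rpow hν.le (by positivity),
      ← rpow_mul hγ0.le, div_div, one_div_div, mul_assoc 2,
      show (1 : ℝ) / 2 * (2 / β) = 1 / β by ring]
    ring
  have hmin (q : ℝ × ℝ) (hq : q ∈ S) : nε * Mε ≤ q.1 * q.2 := by
    rw [hS] at hq
    rw [hn_opt, hM_opt]
    exact isMinOn_mul_feasibleSet ha hb hμ hd hε hq
  refine ⟨?_, fun q hq ↦ ?_, ?_⟩
  · rw [hS, hn_opt, hM_opt]
    exact optimalCoord_mem_feasibleSet ha hb hμ hd hε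
  · calc cost nε Mε = K * (R * (R + 1) / 2) * (nε * Mε) := by rw [hcost]; ring
      _ ≤ K * (R * (R + 1) / 2) * (q.1 * q.2) :=
          mul_le_mul_of_nonneg_left (hmin q hq) (by positivity)
      _ = cost q.1 q.2 := by rw [hcost]; ring
  · rw [hcost, hn, hM, neg_add, rpow_add hε, add_comm (2 * α * R / β) 1]
    ring

/-- Explicit solution of the (relaxed) computational-cost optimization problem:
for every `ε > 0`, the minimum of `(n, M) ↦ K·M·n·R(R+1)/2` over positive reals
`(n, M)` subject to `μ n^{−αR} + ν γ₀^{1/2} M^{−β/2} ≤ ε` is attained at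
`n(ε) = (2αR/β + 1)^{1/(αR)} μ^{1/(αR)} ε^{−1/(αR)}` and
`M(ε) = γ₀^{1/β} ν^{2/β} (1 + β/(2αR))^{2/β} ε^{−2/β}`, with minimal value
`K (R(R+1)/2) γ₀^{1/β} ν^{2/β} μ^{1/(αR)} ε^{−(2/β+1/(αR))}
  (1+2αR/β)^{1/(αR)} (1+β/(2αR))^{2/β}`. -/
theorem cost_optimization_explicit_solution
    (α : ℝ) (hα : 0 < α) (R : ℕ) (hR : 1 ≤ R)
    (β : ℝ) (hβ1 : 1 / 2 < β) (hβ2 : β ≤ 1)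
    (K μ ν γ0 : ℝ) (hK : 0 < K) (hμ : 0 < μ) (hν : 0 < ν) (hγ0 : 0 < γ0)
    (ε : ℝ) (hε : 0 < ε)
    (cost : ℝ → ℝ → ℝ) (hcost : ∀ n M, cost n M = K * M * n * ((R : ℝ) * ((R : ℝ) + 1) / 2))
    (S : Set (ℝ × ℝ))
    (hS : S = {q : ℝ × ℝ | 0 < q.1 ∧ 0 < q.2 ∧
      μ * q.1 ^ (-(α * (R : ℝ))) + ν * γ0 ^ ((1 : ℝ) / 2) * q.2 ^ (-(β / 2)) ≤ ε})
    (nε Mε : ℝ)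
    (hn : nε = (2 * α * (R : ℝ) / β + 1) ^ (1 / (α * (R : ℝ))) * μ ^ (1 / (α * (R : ℝ))) *
      ε ^ (-(1 / (α * (R : ℝ)))))
    (hM : Mε = γ0 ^ (1 / β) * ν ^ (2 / β) * (1 + β / (2 * α * (R : ℝ))) ^ (2 / β) *
      ε ^ (-(2 / β))) :
    (nε, Mε) ∈ S ∧ (∀ q ∈ S, cost nε Mε ≤ cost q.1 q.2) ∧
      cost nε Mε =
        K * ((R : ℝ) * ((R : ℝ) + 1) / 2) * γ0 ^ (1 / β) * ν ^ (2 / β) *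
          μ ^ (1 / (α * (R : ℝ))) * ε ^ (-(2 / β + 1 / (α * (R : ℝ)))) *
          (1 + 2 * α * (R : ℝ) / β) ^ (1 / (α * (R : ℝ))) *
          (1 + β / (2 * α * (R : ℝ))) ^ (2 / β) := by
  exact cost_optimization_explicit_solution_general hα (Nat.cast_pos.2 hR) (by linarith) hK.le
    hμ hν hγ0 hε hcost hS hn hM
end

section
/- For every α ∈ (0, 2], dimension d ≥ 1, T > 0 and K_1, K_2 > 0, there exist constants K > 0 and C > 0 such that for all t ∈ (0, T], all τ ∈ (0, t) and all x, y ∈ ℝ^d: ∫_{ℝ^d} p̄^α_{K_1}(τ, x, z) · p̄^α_{K_2}(t − τ, z, y) dz ≤ C p̄^α_K(t, x, y). -/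
open Filter Real MeasureTheory

/-- The stable/Gaussian-type density bound `p̄^α_K`:
for `α ∈ (0,2)`, `p̄^α_K(t,x,y) = t^{−d/α} / ( max(K, |y−x|/t^{1/α}) )^{d+α}`,
and for `α = 2`, `p̄^2_K(t,x,y) = t^{−d/2} exp(−K |y−x|²/t)`. -/
noncomputable def pbar (α K : ℝ) (d : ℕ) (t : ℝ)
    (x y : EuclideanSpace ℝ (Fin d)) : ℝ :=
  if α = 2 then t ^ (-(d : ℝ) / 2) * Real.exp (-K * ‖y - x‖ ^ 2 / t)
  else t ^ (-(d : ℝ) / α) / (max K (‖y - x‖ / t ^ (1 / α))) ^ ((d : ℝ) + α)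

/-!
The product of two kernels `p = pbar α K` satisfies the three-point (3P) inequality
`p τ x z * p s z y ≤ C * p' (τ + s) x y * (p' τ x z + p' s z y)`, where `p' = pbar α (K / 2)`.
Integrating in `z` gives the semigroup property, since `∫ p' t x z dz` is finite and, by scaling,
independent of `t` and `x`.

For positive `u`, `v`, `w` the bound `w ≤ C (u + v)` is equivalent to
`u⁻¹ v⁻¹ ≤ C w⁻¹ (u⁻¹ + v⁻¹)`. In the power-law case this is the 3P inequality once `1 / p` is seen
to be quasi-subadditive. In the Gaussian case it is applied to the prefactors `t ^ (d / 2)` alone;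
half of the exponent, through `|y - x|² / (τ + s) ≤ |z - x|² / τ + |y - z|² / s`, pays for the
decay in `y - x`.
-/

section RealInequalities

variable {τ s a b c : ℝ}

theorem add_rpow_le_two_rpow_mul {p : ℝ} (ha : 0 ≤ a) (hb : 0 ≤ b) (hp : 0 ≤ p) :
    (a + b) ^ p ≤ 2 ^ p * (a ^ p + b ^ p) :=
  calc (a + b) ^ p ≤ (2 * max a b) ^ p := by
        gcongr
        linarith [le_max_left a b, le_max_right a b]
    _ = 2 ^ p * max (a ^ p) (b ^ p) := by
        rw [mul_rpow zero_le_two (le_max_of_le_left ha), rpow_max ha hb hp]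
    _ ≤ 2 ^ p * (a ^ p + b ^ p) := by
        gcongr
        exact max_le_add_of_nonneg (rpow_nonneg ha p) (rpow_nonneg hb p)

theorem inv_mul_inv_le_of_le_mul_add {𝕜 : Type*} [Field 𝕜] [LinearOrder 𝕜]
    [IsStrictOrderedRing 𝕜] {u v w C : 𝕜} (hu : 0 < u) (hv : 0 < v) (hw : 0 < w)
    (h : w ≤ C * (u + v)) : u⁻¹ * v⁻¹ ≤ C * w⁻¹ * (u⁻¹ + v⁻¹) :=
  calc u⁻¹ * v⁻¹ = w * (w⁻¹ * (u⁻¹ * v⁻¹)) := by field_simp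
    _ ≤ C * (u + v) * (w⁻¹ * (u⁻¹ * v⁻¹)) := by gcongr
    _ = C * w⁻¹ * (u⁻¹ + v⁻¹) := by field_simp; ring

theorem sq_div_add_le_of_le_add (hτ : 0 < τ) (hs : 0 < s) (hc : 0 ≤ c) (habc : c ≤ a + b) :
    c ^ 2 / (τ + s) ≤ a ^ 2 / τ + b ^ 2 / s :=
  calc c ^ 2 / (τ + s) ≤ (a + b) ^ 2 / (τ + s) := by gcongr
    _ ≤ a ^ 2 / τ + b ^ 2 / s := by
        simpa using Finset.univ.sq_sum_div_le_sum_sq_div ![a, b] (g := ![τ, s])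
          (by simp [Fin.forall_fin_two, hτ, hs])

theorem exp_neg_mul_mul_exp_neg_mul_le {K A B D : ℝ} (hK : 0 ≤ K) (hB : 0 ≤ B) (hD : D ≤ A + B) :
    exp (-K * A) * exp (-K * B) ≤ exp (-(K / 2) * D) * exp (-(K / 2) * A) := by
  rw [← exp_add, ← exp_add, exp_le_exp]
  nlinarith [mul_le_mul_of_nonneg_left hD hK, mul_nonneg hK hB]

theorem gaussian_three_point {K β : ℝ} (hK : 0 ≤ K) (hβ : 0 ≤ β) (hτ : 0 < τ) (hs : 0 < s)
    (hc : 0 ≤ c) (habc : c ≤ a + b) :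
    (τ ^ β)⁻¹ * exp (-K * (a ^ 2 / τ)) * ((s ^ β)⁻¹ * exp (-K * (b ^ 2 / s))) ≤
      2 ^ β * ((τ + s) ^ β)⁻¹ * exp (-(K / 2) * (c ^ 2 / (τ + s))) *
        ((τ ^ β)⁻¹ * exp (-(K / 2) * (a ^ 2 / τ)) + (s ^ β)⁻¹ * exp (-(K / 2) * (b ^ 2 / s))) := by
  have hexponent := sq_div_add_le_of_le_add hτ hs hc habc
  have hA : 0 ≤ a ^ 2 / τ := by positivity
  have hB : 0 ≤ b ^ 2 / s := by positivity
  have hexp₁ := exp_neg_mul_mul_exp_neg_mul_le hK hB hexponent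
  have hexp₂ := exp_neg_mul_mul_exp_neg_mul_le hK hA (hexponent.trans_eq (add_comm _ _))
  rw [mul_comm (exp (-K * _))] at hexp₂
  have hprefactor : (τ ^ β)⁻¹ * (s ^ β)⁻¹ ≤
      2 ^ β * ((τ + s) ^ β)⁻¹ * ((τ ^ β)⁻¹ + (s ^ β)⁻¹) :=
    inv_mul_inv_le_of_le_mul_add (by positivity) (by positivity) (by positivity)
      (add_rpow_le_two_rpow_mul hτ.le hs.le hβ)
  set u := (τ ^ β)⁻¹
  set v := (s ^ β)⁻¹
  set w := ((τ + s) ^ β)⁻¹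
  set E := exp (-K * (a ^ 2 / τ)) * exp (-K * (b ^ 2 / s))
  calc _ = u * v * E := by ring
    _ ≤ 2 ^ β * w * (u + v) * E := by gcongr
    _ = 2 ^ β * w * (u * E + v * E) := by ring
    _ ≤ 2 ^ β * w *
          (u * (exp (-(K / 2) * (c ^ 2 / (τ + s))) * exp (-(K / 2) * (a ^ 2 / τ))) +
            v * (exp (-(K / 2) * (c ^ 2 / (τ + s))) * exp (-(K / 2) * (b ^ 2 / s)))) := by
        gcongr
    _ = _ := by ring

/-- The reciprocal of the power-law profile `t ^ (-δ / α) / max K (r / t ^ (1 / α)) ^ (δ + α)`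
(see `pbar_eq_inv_stableWeight`), with its near-diagonal and tail regimes as the two entries of a
maximum. -/
noncomputable def stableWeight (α δ K t r : ℝ) : ℝ :=
  max (K ^ (δ + α) * t ^ (δ / α)) (r ^ (δ + α) / t)

theorem stableWeight_pos {α δ K t : ℝ} (hK : 0 < K) (ht : 0 < t) (r : ℝ) :
    0 < stableWeight α δ K t r :=
  lt_max_of_lt_left (by positivity)

theorem stableWeight_add_le {α δ K : ℝ} (hα : 0 ≤ α) (hδ : 0 ≤ δ) (hK : 0 ≤ K)
    (hτ : 0 < τ) (hs : 0 < s) (ha : 0 ≤ a) (hb : 0 ≤ b) (hc : 0 ≤ c) (habc : c ≤ a + b) :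
    stableWeight α δ K (τ + s) c ≤
      max (2 ^ (δ / α)) (2 ^ (δ + α)) * (stableWeight α δ K τ a + stableWeight α δ K s b) := by
  refine max_le ?near_diagonal ?tail
  case near_diagonal =>
    calc K ^ (δ + α) * (τ + s) ^ (δ / α)
        ≤ K ^ (δ + α) * (2 ^ (δ / α) * (τ ^ (δ / α) + s ^ (δ / α))) := by
          gcongr
          exact add_rpow_le_two_rpow_mul hτ.le hs.le (by positivity)
      _ = 2 ^ (δ / α) * (K ^ (δ + α) * τ ^ (δ / α) + K ^ (δ + α) * s ^ (δ / α)) := by ring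
      _ ≤ _ := by
          gcongr
          exacts [le_max_left _ _, le_max_left _ _, le_max_left _ _]
  case tail =>
    calc c ^ (δ + α) / (τ + s)
        ≤ 2 ^ (δ + α) * (a ^ (δ + α) + b ^ (δ + α)) / (τ + s) := by
          gcongr
          exact (rpow_le_rpow hc habc (by positivity)).trans
            (add_rpow_le_two_rpow_mul ha hb (by positivity))
      _ = 2 ^ (δ + α) * (a ^ (δ + α) / (τ + s) + b ^ (δ + α) / (τ + s)) := by ring
      _ ≤ 2 ^ (δ + α) * (a ^ (δ + α) / τ + b ^ (δ + α) / s) := by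
          gcongr <;> linarith
      _ ≤ _ := by
          gcongr
          exacts [le_max_right _ _, le_max_right _ _, le_max_right _ _]

end RealInequalities

section Integrability

variable {E : Type*} [NormedAddCommGroup E] [MeasurableSpace E] [BorelSpace E]

theorem integrable_exp_neg_mul_sq_norm [InnerProductSpace ℝ E] [FiniteDimensional ℝ E]
    {b : ℝ} (hb : 0 < b) : Integrable fun v : E ↦ exp (-b * ‖v‖ ^ 2) := by
  refine .of_integral_ne_zero ?_
  rw [GaussianFourier.integral_rexp_neg_mul_sq_norm hb]
  positivity

theorem integrable_max_norm_rpow_neg [NormedSpace ℝ E] [FiniteDimensional ℝ E]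
    (μ : Measure E) [μ.IsAddHaarMeasure] {K r : ℝ} (hK : 0 < K)
    (hr : (Module.finrank ℝ E : ℝ) < r) : Integrable (fun x : E ↦ max K ‖x‖ ^ (-r)) μ := by
  have hbound (x : E) : (1 / K + 1)⁻¹ * (1 + ‖x‖) ≤ max K ‖x‖ := by
    have hone : 1 ≤ 1 / K * max K ‖x‖ := by
      rw [one_div_mul_eq_div, one_le_div hK]
      exact le_max_left _ _
    rw [inv_mul_le_iff₀ (by positivity)]
    linarith [le_max_right K ‖x‖]
  refine ((integrable_one_add_norm (μ := μ) hr).const_mul ((1 / K + 1)⁻¹ ^ (-r))).mono'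
    (Measurable.aestronglyMeasurable (by fun_prop)) (.of_forall fun x ↦ ?_)
  rw [norm_of_nonneg (by positivity), ← mul_rpow (by positivity) (by positivity)]
  exact rpow_le_rpow_of_nonpos (by positivity) (hbound x)
    (neg_nonpos.2 ((Nat.cast_nonneg _).trans hr.le))

end Integrability

section Pbar

variable {α K t : ℝ} {d : ℕ}

theorem pbar_pos (hK : 0 < K) (ht : 0 < t) (x y : EuclideanSpace ℝ (Fin d)) :
    0 < pbar α K d t x y := by
  have : 0 < max K (‖y - x‖ / t ^ (1 / α)) := lt_max_of_lt_left hK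
  unfold pbar
  split_ifs <;> positivity

theorem pbar_comm (α K : ℝ) (d : ℕ) (t : ℝ) (x y : EuclideanSpace ℝ (Fin d)) :
    pbar α K d t x y = pbar α K d t y x := by
  simp only [pbar, norm_sub_rev]

theorem pbar_anti {K' : ℝ} (hα : 0 ≤ α) (hK : 0 < K) (hKK' : K ≤ K') (ht : 0 < t)
    (x y : EuclideanSpace ℝ (Fin d)) : pbar α K' d t x y ≤ pbar α K d t x y := by
  have : 0 < max K (‖y - x‖ / t ^ (1 / α)) := lt_max_of_lt_left hK
  unfold pbar
  split_ifs <;> gcongr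

theorem pbar_two (ht : 0 ≤ t) (x y : EuclideanSpace ℝ (Fin d)) :
    pbar 2 K d t x y = (t ^ ((d : ℝ) / 2))⁻¹ * exp (-K * (‖y - x‖ ^ 2 / t)) := by
  rw [pbar, if_pos rfl, neg_div, rpow_neg ht, mul_div_assoc]

theorem pbar_eq_inv_stableWeight (hα : 0 < α) (hα2 : α ≠ 2) (hK : 0 ≤ K) (ht : 0 < t)
    (x y : EuclideanSpace ℝ (Fin d)) :
    pbar α K d t x y = (stableWeight α d K t ‖y - x‖)⁻¹ := by
  have htail : (‖y - x‖ / t ^ (1 / α)) ^ (d + α) * t ^ (d / α) = ‖y - x‖ ^ (d + α) / t := by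
    have hpow : (t ^ (1 / α)) ^ (d + α) = t ^ (d / α) * t := by
      rw [← rpow_mul ht.le, ← rpow_add_one ht.ne']
      congr 1
      field_simp
    rw [div_rpow (norm_nonneg _) (by positivity), hpow]
    field_simp
  rw [pbar, if_neg hα2, stableWeight, ← htail, ← max_mul_of_nonneg _ _ (by positivity),
    ← rpow_max hK (by positivity) (by positivity), neg_div, rpow_neg ht.le]
  field_simp

theorem pbar_eq_inv_pow_mul_pbar_one (hα : α ≠ 0) (ht : 0 < t) (x y : EuclideanSpace ℝ (Fin d)) :
    pbar α K d t x y =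
      ((t ^ (1 / α)) ^ d)⁻¹ * pbar α K d 1 0 ((t ^ (1 / α))⁻¹ • (y - x)) := by
  have hprefactor : ((t ^ (1 / α)) ^ d)⁻¹ = t ^ (-(d : ℝ) / α) := by
    rw [← rpow_mul_natCast ht.le, ← rpow_neg ht.le]
    congr 1
    ring
  have hnorm : ‖(t ^ (1 / α))⁻¹ • (y - x)‖ = ‖y - x‖ / t ^ (1 / α) := by
    rw [norm_smul, norm_of_nonneg (by positivity), inv_mul_eq_div]
  rw [pbar, pbar, hprefactor, sub_zero, hnorm]
  split_ifs with hα2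
  · subst hα2
    rw [div_pow, ← sqrt_eq_rpow, sq_sqrt ht.le, one_rpow, one_mul, div_one, mul_div_assoc]
  · rw [one_rpow, one_rpow, div_one, mul_one_div]

theorem integrable_pbar_one_zero (d : ℕ) (hα : 0 < α) (hK : 0 < K) :
    Integrable fun u : EuclideanSpace ℝ (Fin d) ↦ pbar α K d 1 0 u := by
  by_cases hα2 : α = 2
  · simpa [pbar, hα2] using integrable_exp_neg_mul_sq_norm (E := EuclideanSpace ℝ (Fin d)) hK
  · have hfinrank : (Module.finrank ℝ (EuclideanSpace ℝ (Fin d)) : ℝ) < d + α := by simp [hα]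
    refine (integrable_max_norm_rpow_neg volume hK hfinrank).congr (.of_forall fun u ↦ ?_)
    simp [pbar, hα2, -neg_add_rev, rpow_neg (hK.le.trans (le_max_left K ‖u‖))]

theorem integrable_pbar (hα : 0 < α) (hK : 0 < K) (ht : 0 < t)
    (x : EuclideanSpace ℝ (Fin d)) : Integrable (pbar α K d t x) := by
  have hscale : (t ^ (1 / α))⁻¹ ≠ 0 := by positivity
  simpa only [← pbar_eq_inv_pow_mul_pbar_one hα.ne' ht] using
    (((integrable_pbar_one_zero d hα hK).comp_smul hscale).comp_sub_right x).const_mul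
      ((t ^ (1 / α)) ^ d)⁻¹

theorem integral_pbar (hα : α ≠ 0) (ht : 0 < t) (x : EuclideanSpace ℝ (Fin d)) :
    ∫ z, pbar α K d t x z = ∫ u : EuclideanSpace ℝ (Fin d), pbar α K d 1 0 u := by
  simp_rw [pbar_eq_inv_pow_mul_pbar_one hα ht x]
  rw [integral_const_mul,
    integral_sub_right_eq_self (fun z ↦ pbar α K d 1 0 ((t ^ (1 / α))⁻¹ • z)) x,
    Measure.integral_comp_inv_smul_of_nonneg _ _ (by positivity), finrank_euclideanSpace_fin,
    smul_eq_mul, inv_mul_cancel_left₀ (by positivity)]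

theorem integral_pbar_pos (hα : 0 < α) (hK : 0 < K) (ht : 0 < t)
    (x : EuclideanSpace ℝ (Fin d)) : 0 < ∫ z, pbar α K d t x z := by
  rw [integral_pos_iff_support_of_nonneg (fun z ↦ (pbar_pos hK ht x z).le)
    (integrable_pbar hα hK ht x), Function.support_eq_univ fun z ↦ (pbar_pos hK ht x z).ne']
  exact Measure.measure_univ_pos.2 (NeZero.ne _)

theorem pbar_three_point {τ s : ℝ} (hα : 0 < α) (hK : 0 < K) (hτ : 0 < τ) (hs : 0 < s)
    (x y z : EuclideanSpace ℝ (Fin d)) :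
    pbar α K d τ x z * pbar α K d s z y ≤
      max (2 ^ (d / α)) (2 ^ (d + α)) * pbar α (K / 2) d (τ + s) x y *
        (pbar α (K / 2) d τ x z + pbar α (K / 2) d s z y) := by
  have htriangle : ‖y - x‖ ≤ ‖z - x‖ + ‖y - z‖ := by
    simpa only [add_comm] using norm_sub_le_norm_sub_add_norm_sub y z x
  have hts : 0 < τ + s := add_pos hτ hs
  have hnonneg {t : ℝ} (ht : 0 < t) (x y : EuclideanSpace ℝ (Fin d)) :
      0 ≤ pbar α (K / 2) d t x y := (pbar_pos (half_pos hK) ht x y).le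
  by_cases hα2 : α = 2
  · subst hα2
    have hgauss := gaussian_three_point hK.le (β := d / 2) (by positivity) hτ hs (norm_nonneg _)
      htriangle
    rw [mul_assoc (2 ^ _), ← pbar_two hτ.le, ← pbar_two hτ.le, ← pbar_two hs.le,
      ← pbar_two hs.le, ← pbar_two hts.le] at hgauss
    refine hgauss.trans ?_
    gcongr
    exacts [add_nonneg (hnonneg hτ x z) (hnonneg hs z y), hnonneg hts x y, le_max_left _ _]
  · have hmono {t : ℝ} (ht : 0 < t) (x y : EuclideanSpace ℝ (Fin d)) :
        pbar α K d t x y ≤ pbar α (K / 2) d t x y :=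
      pbar_anti hα.le (half_pos hK) (half_le_self hK.le) ht x y
    refine (mul_le_mul (hmono hτ x z) (hmono hs z y) (pbar_pos hK hs z y).le
      (hnonneg hτ x z)).trans ?_
    have hK2 : 0 < K / 2 := half_pos hK
    simp only [pbar_eq_inv_stableWeight hα hα2 hK2.le, hτ, hs, hts]
    exact inv_mul_inv_le_of_le_mul_add (stableWeight_pos hK2 hτ _) (stableWeight_pos hK2 hs _)
      (stableWeight_pos hK2 hts _) (stableWeight_add_le hα.le (Nat.cast_nonneg d) hK2.le hτ hs
        (norm_nonneg _) (norm_nonneg _) (norm_nonneg _) htriangle)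

end Pbar

theorem pbar_semigroup_property_general {α : ℝ} (hα : 0 < α) (d : ℕ) {K₁ K₂ : ℝ}
    (hK₁ : 0 < K₁) (hK₂ : 0 < K₂) :
    ∃ K > 0, ∃ C > 0, ∀ t τ : ℝ, 0 < τ → τ < t → ∀ x y : EuclideanSpace ℝ (Fin d),
      ∫ z, pbar α K₁ d τ x z * pbar α K₂ d (t - τ) z y ≤ C * pbar α K d t x y := by
  have hmin : 0 < min K₁ K₂ := lt_min hK₁ hK₂
  set K := min K₁ K₂ / 2
  have hK : 0 < K := half_pos hmin
  set M : ℝ := max (2 ^ (d / α)) (2 ^ (d + α))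
  set I := ∫ u : EuclideanSpace ℝ (Fin d), pbar α K d 1 0 u
  have hI : 0 < I := integral_pbar_pos hα hK one_pos 0
  refine ⟨K, hK, M * (2 * I), by positivity, fun t τ hτ hτt x y ↦ ?_⟩
  have hs : 0 < t - τ := sub_pos.2 hτt
  have hthree_point (z : EuclideanSpace ℝ (Fin d)) :
      pbar α K₁ d τ x z * pbar α K₂ d (t - τ) z y ≤
        M * pbar α K d t x y * (pbar α K d τ x z + pbar α K d (t - τ) y z) := by
    have h := pbar_three_point hα hmin hτ hs x y z
    rw [add_sub_cancel, pbar_comm α K d (t - τ) z y] at h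
    exact (mul_le_mul (pbar_anti hα.le hmin (min_le_left _ _) hτ x z)
      (pbar_anti hα.le hmin (min_le_right _ _) hs z y) (pbar_pos hK₂ hs z y).le
      (pbar_pos hmin hτ x z).le).trans h
  have hint₁ := integrable_pbar hα hK hτ x
  have hint₂ := integrable_pbar hα hK hs y
  calc ∫ z, pbar α K₁ d τ x z * pbar α K₂ d (t - τ) z y
      ≤ ∫ z, M * pbar α K d t x y * (pbar α K d τ x z + pbar α K d (t - τ) y z) :=
        integral_mono_of_nonneg
          (.of_forall fun z ↦ mul_nonneg (pbar_pos hK₁ hτ x z).le (pbar_pos hK₂ hs z y).le)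
          ((hint₁.add hint₂).const_mul _) (.of_forall hthree_point)
    _ = M * pbar α K d t x y * (I + I) := by
        rw [integral_const_mul, integral_add hint₁ hint₂, integral_pbar hα.ne' hτ,
          integral_pbar hα.ne' hs]
    _ = M * (2 * I) * pbar α K d t x y := by ring

/-- Semigroup property of the stable/Gaussian-type density bounds:
for every `α ∈ (0,2]`, `d ≥ 1`, `T > 0` and `K₁, K₂ > 0`, there exist `K > 0` and
`C > 0` such that for all `t ∈ (0,T]`, `τ ∈ (0,t)` and `x, y ∈ ℝ^d`,
`∫ p̄^α_{K₁}(τ, x, z) p̄^α_{K₂}(t − τ, z, y) dz ≤ C p̄^α_K(t, x, y)`. -/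
theorem pbar_semigroup_property
    (α : ℝ) (hα0 : 0 < α) (hα2 : α ≤ 2) (d : ℕ) (hd : 1 ≤ d)
    (T : ℝ) (hT : 0 < T) (K₁ K₂ : ℝ) (hK₁ : 0 < K₁) (hK₂ : 0 < K₂) :
    ∃ K > 0, ∃ C > 0, ∀ t : ℝ, 0 < t → t ≤ T → ∀ τ : ℝ, 0 < τ → τ < t →
      ∀ x y : EuclideanSpace ℝ (Fin d),
      (∫ z : EuclideanSpace ℝ (Fin d), pbar α K₁ d τ x z * pbar α K₂ d (t - τ) z y)
        ≤ C * pbar α K d t x y := by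
  obtain ⟨K, hK, C, hC, h⟩ := pbar_semigroup_property_general hα0 d hK₁ hK₂
  exact ⟨K, hK, C, hC, fun t _ _ τ hτ hτt ↦ h t τ hτ hτt⟩
end

section
/- For every α ∈ (0, 2), dimension d ≥ 1 and K > 0, there exists a constant C > 0 such that for all real numbers s, t with 0 < s < t and all x, z, ξ ∈ ℝ^d, at least one of the following two inequalities holds: p̄^α_K(s, x, x + z) ≤ C p̄^α_K(t, x, x + ξ), or (1/(t − s)) p̄^α_K(t − s, x + z, x + ξ) ≤ C (1/t) p̄^α_K(t, x, x + ξ). -/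
open Filter Real MeasureTheory

/-- The `α`-stable-type density bound:
`p̄^α_K(t, x, y) = t^{−d/α} / ( max(K, |y − x| / t^{1/α}) )^{d+α}` for `α ∈ (0,2)`. -/
noncomputable def pbarStable (α K : ℝ) (d : ℕ) (t : ℝ)
    (x y : EuclideanSpace ℝ (Fin d)) : ℝ :=
  t ^ (-(d : ℝ) / α) / (max K (‖y - x‖ / t ^ (1 / α))) ^ ((d : ℝ) + α)

/-!
With `ρ t r = max (K * t ^ (1 / α)) r` (`stableSize`), the weighted kernel `p̄(t, x, y) / t` is
the power `-(d + α)` of `ρ t |y - x|`. Since `s + u ≤ 2 * max s u` and `r + r' ≤ 2 * max r r'`, the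
size `ρ` satisfies the quasi-triangle inequality `ρ (s + u) (r + r') ≤ c * max (ρ s r) (ρ u r')`,
and the alternative records which of the two terms realizes the maximum.
-/

theorem add_rpow_le_two_rpow_mul_max {a b p : ℝ} (ha : 0 ≤ a) (hb : 0 ≤ b) (hp : 0 ≤ p) :
    (a + b) ^ p ≤ 2 ^ p * max (a ^ p) (b ^ p) := by
  calc (a + b) ^ p ≤ (2 * max a b) ^ p := by
        gcongr
        linarith [le_max_left a b, le_max_right a b]
    _ = 2 ^ p * max (a ^ p) (b ^ p) := by
        rw [mul_rpow zero_le_two (le_max_of_le_left ha), rpow_max ha hb hp]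

theorem rpow_neg_le_rpow_mul_rpow_neg {a b c q : ℝ} (ha : 0 < a) (hb : 0 ≤ b) (hc : 0 < c)
    (hq : 0 ≤ q) (h : a ≤ c * b) : b ^ (-q) ≤ c ^ q * a ^ (-q) := by
  have hmono : (c * b) ^ (-q) ≤ a ^ (-q) :=
    rpow_le_rpow_of_nonpos ha h (neg_nonpos.2 hq)
  calc b ^ (-q) = c ^ q * (c * b) ^ (-q) := by
        rw [mul_rpow hc.le hb, ← mul_assoc, ← rpow_add hc, add_neg_cancel, rpow_zero, one_mul]
    _ ≤ c ^ q * a ^ (-q) := by gcongr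

/-- The parabolic size of a displacement of length `r` during a time `t` for the `α`-stable
scaling: the larger of `r` and `K` times the typical displacement `t ^ (1 / α)`. -/
noncomputable def stableSize (α K t r : ℝ) : ℝ :=
  max (K * t ^ (1 / α)) r

theorem stableSize_pos {α K t r : ℝ} (hK : 0 < K) (ht : 0 < t) : 0 < stableSize α K t r :=
  lt_max_of_lt_left (mul_pos hK (rpow_pos_of_pos ht _))

theorem stableSize_mono_right {α K t : ℝ} : Monotone (stableSize α K t) :=
  fun _ _ h ↦ max_le_max_left _ h

theorem stableSize_add_le {α K s u r r' : ℝ} (hα : 0 ≤ α) (hK : 0 ≤ K) (hs : 0 ≤ s) (hu : 0 ≤ u) :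
    stableSize α K (s + u) (r + r') ≤
      max 2 (2 ^ (1 / α)) * max (stableSize α K s r) (stableSize α K u r') := by
  set M := max (stableSize α K s r) (stableSize α K u r')
  have hsM : stableSize α K s r ≤ M := le_max_left _ _
  have huM : stableSize α K u r' ≤ M := le_max_right _ _
  have hM : 0 ≤ M := by
    have : 0 ≤ K * s ^ (1 / α) := by positivity
    exact this.trans ((le_max_left _ _).trans hsM)
  refine max_le ?_ ?_
  · calc K * (s + u) ^ (1 / α)
        ≤ K * (2 ^ (1 / α) * max (s ^ (1 / α)) (u ^ (1 / α))) := by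
          gcongr
          exact add_rpow_le_two_rpow_mul_max hs hu (one_div_nonneg.2 hα)
      _ = 2 ^ (1 / α) * max (K * s ^ (1 / α)) (K * u ^ (1 / α)) := by
          rw [← mul_max_of_nonneg _ _ hK, mul_left_comm]
      _ ≤ max 2 (2 ^ (1 / α)) * M := by
          gcongr
          · exact le_max_right _ _
          · exact max_le ((le_max_left _ _).trans hsM) ((le_max_left _ _).trans huM)
  · calc r + r' ≤ M + M :=
          add_le_add ((le_max_right _ _).trans hsM) ((le_max_right _ _).trans huM)
      _ = 2 * M := (two_mul M).symm
      _ ≤ max 2 (2 ^ (1 / α)) * M := by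
          gcongr
          exact le_max_left _ _

section Kernel

variable {E : Type*} [PseudoMetricSpace E] {α K D : ℝ}

/-- The stable-type density bound on a metric space: `pbarStable` with the Euclidean distance
replaced by that of `E`, and the dimension by a real parameter `D` (such as the exponent of volume
growth of `E`). -/
noncomputable def stableKernel (α K D t : ℝ) (x y : E) : ℝ :=
  t ^ (-D / α) / max K (dist x y / t ^ (1 / α)) ^ (D + α)

theorem pbarStable_eq_stableKernel (α K : ℝ) (d : ℕ) :
    pbarStable α K d = stableKernel α K d := by
  funext t x y
  rw [pbarStable, stableKernel, dist_eq_norm']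

theorem one_div_mul_stableKernel {t : ℝ} (hα : α ≠ 0) (ht : 0 < t) (x y : E) :
    1 / t * stableKernel α K D t x y = stableSize α K t (dist x y) ^ (-(D + α)) := by
  have hτ : 0 < t ^ (1 / α) := rpow_pos_of_pos ht _
  have hmax : 0 ≤ max K (dist x y / t ^ (1 / α)) := le_max_of_le_right (by positivity)
  have hsize : stableSize α K t (dist x y) = max K (dist x y / t ^ (1 / α)) * t ^ (1 / α) := by
    rw [stableSize, max_mul_of_nonneg _ _ hτ.le, div_mul_cancel₀ _ hτ.ne']
  have hpow : (t ^ (1 / α)) ^ (-(D + α)) = 1 / t * t ^ (-D / α) := by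
    rw [← rpow_mul ht.le, show 1 / α * -(D + α) = -1 + -D / α by field_simp; ring,
      rpow_add ht, rpow_neg_one, one_div]
  rw [hsize, mul_rpow hmax hτ.le, hpow, rpow_neg hmax, stableKernel]
  ring

theorem stableKernel_nonneg {t : ℝ} (ht : 0 ≤ t) (x y : E) : 0 ≤ stableKernel α K D t x y :=
  div_nonneg (rpow_nonneg ht _) (rpow_nonneg (le_max_of_le_right (by positivity)) _)

theorem one_div_mul_stableKernel_le_of_stableSize_le {c s t : ℝ} {x y x' y' : E} (hα : α ≠ 0)
    (hK : 0 < K) (hD : 0 ≤ D + α) (hc : 0 < c) (hs : 0 < s) (ht : 0 < t)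
    (h : stableSize α K t (dist x' y') ≤ c * stableSize α K s (dist x y)) :
    1 / s * stableKernel α K D s x y ≤
      c ^ (D + α) * (1 / t * stableKernel α K D t x' y') := by
  rw [one_div_mul_stableKernel hα hs, one_div_mul_stableKernel hα ht]
  exact rpow_neg_le_rpow_mul_rpow_neg (stableSize_pos hK ht) (stableSize_pos hK hs).le hc hD h

theorem one_div_mul_stableKernel_le_or_le {s u : ℝ} (hα : 0 < α) (hK : 0 < K) (hD : 0 ≤ D + α)
    (hs : 0 < s) (hu : 0 < u) (x y z : E) :
    1 / s * stableKernel α K D s x y ≤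
        max 2 (2 ^ (1 / α)) ^ (D + α) * (1 / (s + u) * stableKernel α K D (s + u) x z) ∨
      1 / u * stableKernel α K D u y z ≤
        max 2 (2 ^ (1 / α)) ^ (D + α) * (1 / (s + u) * stableKernel α K D (s + u) x z) := by
  have hc : (0 : ℝ) < max 2 (2 ^ (1 / α)) := lt_max_of_lt_left two_pos
  have hsize : stableSize α K (s + u) (dist x z) ≤ max 2 (2 ^ (1 / α)) *
      max (stableSize α K s (dist x y)) (stableSize α K u (dist y z)) :=
    (stableSize_mono_right (dist_triangle x y z)).trans
      (stableSize_add_le hα.le hK.le hs.le hu.le)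
  rw [mul_max_of_nonneg _ _ hc.le, le_max_iff] at hsize
  exact hsize.imp
    (one_div_mul_stableKernel_le_of_stableSize_le hα.ne' hK hD hc hs (add_pos hs hu))
    (one_div_mul_stableKernel_le_of_stableSize_le hα.ne' hK hD hc hu (add_pos hs hu))

end Kernel

theorem pbar_alternative_general {E : Type*} [PseudoMetricSpace E] {α K D : ℝ} (hα : 0 < α)
    (hK : 0 < K) (hD : 0 ≤ D + α) :
    ∃ C > 0, ∀ s t : ℝ, 0 < s → s < t → ∀ x y z : E,
      stableKernel α K D s x y ≤ C * stableKernel α K D t x z ∨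
      1 / (t - s) * stableKernel α K D (t - s) y z ≤ C * (1 / t) * stableKernel α K D t x z := by
  refine ⟨max 2 (2 ^ (1 / α)) ^ (D + α), by positivity, fun s t hs hst x y z ↦ ?_⟩
  have halt := one_div_mul_stableKernel_le_or_le hα hK hD hs (sub_pos.2 hst) x y z
  rw [add_sub_cancel, ← mul_assoc] at halt
  refine halt.imp_left fun h ↦ ?_
  set C : ℝ := max 2 (2 ^ (1 / α)) ^ (D + α)
  have ht : 0 < t := hs.trans hst
  have hp : 0 ≤ stableKernel α K D t x z := stableKernel_nonneg ht.le x z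
  calc stableKernel α K D s x y = s * (1 / s * stableKernel α K D s x y) := by field_simp
    _ ≤ s * (C * (1 / t) * stableKernel α K D t x z) := by gcongr
    _ ≤ t * (C * (1 / t) * stableKernel α K D t x z) := by gcongr
    _ = C * stableKernel α K D t x z := by field_simp

/-- The dichotomy for stable-type densities: for `α ∈ (0,2)`, `d ≥ 1`, `K > 0` there is
`C > 0` such that for all `0 < s < t` and `x, z, ξ ∈ ℝ^d`, either
`p̄^α_K(s, x, x+z) ≤ C p̄^α_K(t, x, x+ξ)` or
`(1/(t−s)) p̄^α_K(t−s, x+z, x+ξ) ≤ C (1/t) p̄^α_K(t, x, x+ξ)`. -/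
theorem pbar_alternative
    (α : ℝ) (hα0 : 0 < α) (hα2 : α < 2) (d : ℕ) (hd : 1 ≤ d) (K : ℝ) (hK : 0 < K) :
    ∃ C > 0, ∀ s t : ℝ, 0 < s → s < t → ∀ x z ξ : EuclideanSpace ℝ (Fin d),
      pbarStable α K d s x (x + z) ≤ C * pbarStable α K d t x (x + ξ) ∨
      (1 / (t - s)) * pbarStable α K d (t - s) (x + z) (x + ξ)
        ≤ C * (1 / t) * pbarStable α K d t x (x + ξ) := by
  obtain ⟨C, hC, h⟩ := pbar_alternative_general (E := EuclideanSpace ℝ (Fin d)) (D := d) hα0 hK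
    (by positivity)
  exact ⟨C, hC, fun s t hs hst x z ξ ↦ by
    simpa only [pbarStable_eq_stableKernel] using h s t hs hst x (x + z) (x + ξ)⟩
end
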